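/- Covariance duality (Lemma 2.4, case of ★-heights and ⋄-spins): Assume G is connected with boundary vertex ∂. For all ε, ω ∈ ℝ^E, ν_★[(dh,ε)(dh,ω)] + μ_⋄[(𝒰'(J),ε)(𝒰'(J),ω)] = Σ_{e∈E} μ_⋄[𝒰''(J_e)] ε_e ω_e, where (𝒰'(J),ε) = Σ_{e∈E} 𝒰'(J_e) ε_e. -/

import Mathlib

/-!
# Covariance duality of ★-heights and ⋄-spins

The identity is Poisson summation on the compact group `ker d* ⊆ (ℝ/2πℤ)^E`, differentiated twice.
The characters of the torus are `J ↦ exp(i (n, J))` with `n ∈ ℤ^E`. Such a character is trivial on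
`ker d*` exactly when `n` is a gradient (`pairing_grad`, `exists_grad_of_pairing`), and on a
connected graph a gradient determines the height function vanishing at `∂` (`grad_injective`).
By invariance of the Haar measure every other character integrates to zero, so for absolutely
summable coefficients `a_e : ℤ → ℂ`
`∫ ∏_e (∑_k a_e(k) exp(i k J_e)) dλ(J) = ∑_{h, h(∂) = 0} ∏_e a_e((dh)_e)`
(`hasSum_integral_prod_fseries`).

The weight `w` and its first two derivatives are the Fourier series with coefficients
`(i k)^j p_k`, `j = 0, 1, 2`. With `j = 0` on every edge the formula identifies the two partition
functions (`partition_function_eq`). With one extra derivative on each of the edges `e` and `f`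
(two on `e` when `e = f`), and since `w' / w = -𝒰'` and `w'' / w = 𝒰'^2 - 𝒰''`, it yields
`∑_h (dh)_e (dh)_f ∏ p = 1_{e = f} ∫ 𝒰''(J_e) ∏ w - ∫ 𝒰'(J_e) 𝒰'(J_f) ∏ w`
(`hasSum_edge_pair`). The theorem is the sum of these identities against `ε_e ω_f`, divided by the
common partition function.
-/

open MeasureTheory Real
noncomputable section

instance : Fact (0 < 2 * π) := ⟨by positivity⟩

/-- `Real.Angle = ℝ/2πℤ` with its Borel σ-algebra. -/
instance : MeasurableSpace Real.Angle := by unfold Real.Angle; infer_instance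

/-- Gradient of a `G`-valued function on the vertices: `(df)_e = f(tgt e) - f(src e)`. -/
def grad {V E G : Type*} [AddCommGroup G] (src tgt : E → V) (f : V → G) : E → G :=
  fun e => f (tgt e) - f (src e)

/-- Divergence of a `G`-valued 1-form: `(d*ω)_x = Σ_{e : tgt e = x} ω_e - Σ_{e : src e = x} ω_e`. -/
def divg {V E G : Type*} [Fintype E] [DecidableEq V] [AddCommGroup G]
    (src tgt : E → V) (ω : E → G) : V → G :=
  fun x => (∑ e, if tgt e = x then ω e else 0) - ∑ e, if src e = x then ω e else 0

/-- Connectivity of the (multi)graph encoded by `src, tgt : E → V`. -/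
def IsConn {V E : Type*} (src tgt : E → V) : Prop :=
  ∀ x y : V, Relation.ReflTransGen
    (fun a b => ∃ e, (src e = a ∧ tgt e = b) ∨ (src e = b ∧ tgt e = a)) x y

/-- The spin weight `w(α) = Σ_{n∈ℤ} e^{-𝒱(n)} e^{inα}`, written with `p n = e^{-𝒱(n)}`. -/
def wgt (p : ℤ → ℝ) (α : ℝ) : ℝ := ∑' n : ℤ, p n * Real.cos (n * α)

/-- The dual spin potential `𝒰 = -log w`. -/
def spinU (p : ℤ → ℝ) : ℝ → ℝ := fun t => -Real.log (wgt p t)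

/-- `lam` is the Haar probability measure of the compact group `ker(d*) ⊆ (ℝ/2πℤ)^E`:
a probability measure carried by `ker(d*)` and invariant under translation by every element
of `ker(d*)` (these properties characterise it uniquely). -/
def IsKerHaar {V E : Type*} [Fintype E] [DecidableEq V] (src tgt : E → V)
    (lam : Measure (E → Real.Angle)) : Prop :=
  IsProbabilityMeasure lam ∧
  lam {J | divg src tgt J = 0} = 1 ∧
  ∀ J₀ : E → Real.Angle, divg src tgt J₀ = 0 →
    Measure.map (fun J => J₀ + J) lam = lam

/-- Expectation with respect to the ★-height measure `ν_★(h) ∝ exp(-Σ_e 𝒱((dh)_e))` on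
functions `h : V → ℤ` with `h ∂ = 0`, with `p = e^{-𝒱}`. -/
def starHeightExp {V E : Type*} [Fintype E] (src tgt : E → V) (bd : V)
    (p : ℤ → ℝ) (F : (V → ℤ) → ℝ) : ℝ :=
  (∑' h : {h : V → ℤ // h bd = 0}, F h.1 * ∏ e, p (grad src tgt h.1 e)) /
    ∑' h : {h : V → ℤ // h bd = 0}, ∏ e, p (grad src tgt h.1 e)

/-- Expectation with respect to the ⋄-spin measure: density `∝ Π_e w(J_e)` with respect to
the Haar probability measure `lam` of `ker(d*)`; `w` is `2π`-periodic and is evaluated at the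
representative `(J e).toReal ∈ (-π,π]`. -/
def diamSpinExp {E : Type*} [Fintype E] (p : ℤ → ℝ)
    (lam : Measure (E → Real.Angle)) (F : (E → Real.Angle) → ℝ) : ℝ :=
  (∫ J, F J * ∏ e, wgt p ((J e).toReal) ∂ lam) /
    ∫ J, ∏ e, wgt p ((J e).toReal) ∂ lam

/-! ### Topology of the circle -/

instance : BorelSpace Real.Angle := inferInstanceAs (BorelSpace (AddCircle (2 * π)))
instance : SecondCountableTopology Real.Angle :=
  inferInstanceAs (SecondCountableTopology (AddCircle (2 * π)))
instance : CompactSpace Real.Angle := inferInstanceAs (CompactSpace (AddCircle (2 * π)))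

/-! ### Gradients and integer flows -/

section Graph

theorem grad_injective {V E : Type*} {src tgt : E → V} (hconn : IsConn src tgt) (bd : V) :
    Function.Injective fun h : {h : V → ℤ // h bd = 0} => grad src tgt h.1 := by
  intro h k hhk
  apply Subtype.ext
  funext x
  induction hconn bd x with
  | refl => rw [h.2, k.2]
  | tail _ hstep ih =>
    obtain ⟨e, ⟨h1, h2⟩ | ⟨h1, h2⟩⟩ := hstep
    all_goals
      have := congrFun hhk e
      simp only [grad, h1, h2] at this
      linarith

variable {V E : Type*} [Fintype E] [DecidableEq V] {src tgt : E → V}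

theorem divg_add {G : Type*} [AddCommGroup G] (a b : E → G) :
    divg src tgt (a + b) = divg src tgt a + divg src tgt b := by
  funext x
  have key (q : E → Prop) [DecidablePred q] :
      ∑ e, (if q e then (a + b) e else 0)
        = (∑ e, if q e then a e else 0) + ∑ e, if q e then b e else 0 := by
    rw [← Finset.sum_add_distrib]
    exact Finset.sum_congr rfl fun e _ => by split_ifs <;> simp
  simp only [divg, Pi.add_apply] at *
  rw [key, key]
  abel

theorem divg_map {G H : Type*} [AddCommGroup G] [AddCommGroup H] (φ : G →+ H) (a : E → G) (x : V) :
    divg src tgt (fun e => φ (a e)) x = φ (divg src tgt a x) := by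
  simp [divg, map_sum, apply_ite φ]

theorem divg_neg {G : Type*} [AddCommGroup G] (a : E → G) :
    divg src tgt (-a) = -divg src tgt a :=
  funext fun x => divg_map (-AddMonoidHom.id G) a x

theorem divg_single [DecidableEq E] (e : E) :
    divg src tgt (Pi.single e (1 : ℤ)) = Pi.single (tgt e) 1 - Pi.single (src e) 1 := by
  funext x
  have key (q : E → Prop) [DecidablePred q] :
      ∑ i, (if q i then (Pi.single e (1 : ℤ) : E → ℤ) i else 0) = if q e then 1 else 0 := by
    rw [Finset.sum_eq_single e]
    · simp
    · intro b _ hb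
      simp [hb]
    · simp
  simp only [divg, key]
  simp [Pi.single_apply, eq_comm]

/-- Unit integer flows from `bd` to any vertex, obtained by following a path. -/
theorem exists_flow (hconn : IsConn src tgt) (bd x : V) :
    ∃ c : E → ℤ, divg src tgt c = Pi.single x 1 - Pi.single bd 1 := by
  classical
  induction hconn bd x with
  | refl => exact ⟨0, by funext x; simp [divg]⟩
  | tail _ hstep ih =>
    obtain ⟨c, hc⟩ := ih
    obtain ⟨e, ⟨h1, h2⟩ | ⟨h1, h2⟩⟩ := hstep
    · refine ⟨c + Pi.single e 1, ?_⟩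
      rw [divg_add, hc, divg_single, h1, h2]
      abel
    · refine ⟨c + -Pi.single e 1, ?_⟩
      rw [divg_add, hc, divg_neg, divg_single, h1, h2]
      abel

/-- The pairing of an integer 1-form with an angle-valued 1-form; `n ↦ ⟨n, ·⟩` enumerates the
characters of the torus `(ℝ/2πℤ)^E` (in additive notation). -/
def pairing (n : E → ℤ) (J : E → Real.Angle) : Real.Angle := ∑ e, n e • J e

/-- Summation by parts: `(dh, J) = (h, d*J)`. -/
theorem pairing_grad [Fintype V] (h : V → ℤ) (J : E → Real.Angle) :
    pairing (grad src tgt h) J = ∑ x, h x • divg src tgt J x := by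
  have key (f : E → V) : ∑ x, h x • (∑ e, if f e = x then J e else 0) = ∑ e, h (f e) • J e := by
    simp_rw [Finset.smul_sum]
    rw [Finset.sum_comm]
    simp [smul_ite]
  simp only [pairing, grad, divg, smul_sub, Finset.sum_sub_distrib, key, sub_smul]

/-- An integer 1-form whose character is trivial on `ker d*` is a gradient: testing against
`θ` times a closed integer flow shows that its integral along every cycle vanishes. -/
theorem exists_grad_of_pairing (hconn : IsConn src tgt) (bd : V) (n : E → ℤ)
    (hn : ∀ J : E → Real.Angle, divg src tgt J = 0 → pairing n J = 0) :
    ∃ h : {h : V → ℤ // h bd = 0}, grad src tgt h.1 = n := by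
  classical
  have closed (c : E → ℤ) (hc : divg src tgt c = 0) : ∑ e, n e * c e = 0 := by
    by_contra hm
    set m := ∑ e, n e * c e with hmdef
    -- the angle `θ = π / m` is not killed by the nonzero integer `m`
    set θ : Real.Angle := ((π / m : ℝ) : Real.Angle) with hθ
    have h1 : pairing n (fun e => c e • θ) = m • θ := by
      simp only [pairing, hmdef, Finset.sum_smul, mul_smul]
    have h2 : pairing n (fun e => c e • θ) = 0 := by
      apply hn
      funext x
      have := divg_map (src := src) (tgt := tgt) ((smulAddHom ℤ Real.Angle).flip θ) c x
      simpa [hc] using this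
    rw [h1, hθ, ← Real.Angle.coe_zsmul, zsmul_eq_mul, mul_div_cancel₀] at h2
    · exact Real.Angle.pi_ne_zero h2
    · exact_mod_cast hm
  choose c hc using exists_flow hconn bd
  refine ⟨⟨fun x => (∑ e, n e * c x e) - ∑ e, n e * c bd e, sub_self _⟩, ?_⟩
  funext e
  have h0 := closed (c (src e) + Pi.single e 1 + -c (tgt e)) (by
    rw [divg_add, divg_add, divg_neg, hc, hc, divg_single]
    abel)
  simp only [Pi.add_apply, Pi.neg_apply, mul_add, Finset.sum_add_distrib, mul_neg,
    Finset.sum_neg_distrib] at h0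
  have h3 : ∑ i, n i * (Pi.single e (1 : ℤ) : E → ℤ) i = n e := by
    simp [Pi.single_apply]
  simp only [grad]
  linarith

end Graph

/-! ### Characters and Poisson summation on the kernel of the divergence -/

section Fourier

theorem continuous_angle_toCircle : Continuous Real.Angle.toCircle :=
  Continuous.quotient_lift Circle.exp.continuous _

/-- The standard character `θ ↦ e^{iθ}` of `ℝ/2πℤ`, with values in `ℂ`. -/
def angleChar : AddChar Real.Angle ℂ where
  toFun θ := (Real.Angle.toCircle θ : ℂ)
  map_zero_eq_one' := by simp
  map_add_eq_mul' θ ψ := by simp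

theorem angleChar_apply (θ : Real.Angle) : angleChar θ = (Real.Angle.toCircle θ : ℂ) := rfl

theorem norm_angleChar (θ : Real.Angle) : ‖angleChar θ‖ = 1 := Circle.norm_coe _

theorem angleChar_ne_zero (θ : Real.Angle) : angleChar θ ≠ 0 := by simp [angleChar_apply]

variable {E : Type*} [Fintype E]

theorem angleChar_pairing (n : E → ℤ) (J : E → Real.Angle) :
    angleChar (pairing n J) = ∏ e, angleChar (J e) ^ n e := by
  have h (s : Finset E) :
      angleChar (∑ e ∈ s, n e • J e) = ∏ e ∈ s, angleChar (J e) ^ n e := by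
    classical
    induction s using Finset.induction_on with
    | empty => simp
    | insert i s hi ih =>
      rw [Finset.sum_insert hi, Finset.prod_insert hi, AddChar.map_add_eq_mul, ih,
        AddChar.map_zsmul_eq_zpow]
  exact h _

/-- A product of absolutely convergent series is an absolutely convergent series over `ℤ^E`. -/
theorem summable_and_tsum_pi_prod {a : E → ℤ → ℂ} (ha : ∀ e, Summable (a e)) :
    Summable (fun n : E → ℤ => ∏ e, a e (n e)) ∧
      ∑' n : E → ℤ, ∏ e, a e (n e) = ∏ e, ∑' k, a e k := by
  -- counting measure on `ℤ^E` is a product measure, so this is Fubini's theorem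
  have hcount : Measure.pi (fun _ : E => (Measure.count : Measure ℤ)) = Measure.count :=
    Measure.ext_of_singleton fun f => by simp [Measure.pi_singleton]
  have hint (e : E) : Integrable (a e) Measure.count := integrable_count_iff.2 (ha e).norm
  have h1 := Integrable.fintype_prod (μ := fun _ : E => (Measure.count : Measure ℤ)) hint
  have h2 := integral_fintype_prod_eq_prod (μ := fun _ : E => (Measure.count : Measure ℤ)) a
  rw [hcount] at h1 h2
  rw [integral_countable h1] at h2
  refine ⟨(integrable_count_iff.1 h1).of_norm, ?_⟩
  simp_rw [integral_countable (hint _)] at h2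
  simpa [Measure.real] using h2

theorem continuous_angleChar : Continuous fun θ : Real.Angle => angleChar θ :=
  continuous_subtype_val.comp continuous_angle_toCircle

theorem angleChar_eq_one {θ : Real.Angle} (h : angleChar θ = 1) : θ = 0 := by
  have h' : Real.Angle.toCircle θ = 1 := Circle.ext h
  rw [← Real.Angle.arg_toCircle θ, h']
  simp

theorem continuous_char (n : E → ℤ) :
    Continuous fun J : E → Real.Angle => angleChar (pairing n J) := by
  simp_rw [angleChar_pairing]
  refine continuous_finsetProd _ fun e _ => ?_
  exact (continuous_angleChar.comp (continuous_apply e)).zpow₀ _ fun _ => Or.inl (angleChar_ne_zero _)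

theorem integrable_of_continuous {F : Type*} [NormedAddCommGroup F]
    {lam : Measure (E → Real.Angle)} [IsFiniteMeasure lam]
    [SecondCountableTopologyEither (E → Real.Angle) F]
    {f : (E → Real.Angle) → F} (hf : Continuous f) : Integrable f lam := by
  obtain ⟨C, hC⟩ := isCompact_univ.exists_bound_of_continuousOn hf.continuousOn
  exact Integrable.of_bound hf.aestronglyMeasurable C (Filter.Eventually.of_forall fun J => hC J trivial)

variable {V : Type*} [DecidableEq V] {src tgt : E → V}
  {lam : Measure (E → Real.Angle)}

/-- Orthogonality of characters: invariance of `lam` under a translation that the character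
detects forces its integral to vanish. -/
theorem integral_char_eq_zero (hlam : IsKerHaar src tgt lam) (n : E → ℤ)
    {J₀ : E → Real.Angle} (hJ₀ : divg src tgt J₀ = 0) (hn : pairing n J₀ ≠ 0) :
    ∫ J, angleChar (pairing n J) ∂lam = 0 := by
  obtain ⟨hprob, -, hinv⟩ := hlam
  have hmap := hinv J₀ hJ₀
  -- the push-forward under a non-a.e.-measurable map is the zero measure
  have hae : AEMeasurable (fun J => J₀ + J) lam :=
    AEMeasurable.of_map_ne_zero (by rw [hmap]; exact IsProbabilityMeasure.ne_zero lam)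
  have h1 : ∫ J, angleChar (pairing n J) ∂lam
      = angleChar (pairing n J₀) * ∫ J, angleChar (pairing n J) ∂lam := by
    conv_lhs => rw [← hmap, integral_map hae (continuous_char n).aestronglyMeasurable]
    rw [← integral_const_mul]
    congr 1
    funext J
    have : pairing n (J₀ + J) = pairing n J₀ + pairing n J := by
      simp [pairing, smul_add, Finset.sum_add_distrib]
    rw [this, AddChar.map_add_eq_mul]
  have h2 : angleChar (pairing n J₀) ≠ 1 := fun h =>
    hn (angleChar_eq_one h)
  by_contra h0
  exact h2 (mul_right_cancel₀ h0 (by rw [one_mul]; exact h1.symm))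

/-- The character of a gradient equals `1` on `ker d*`, which carries all the mass. -/
theorem integral_char_grad [Fintype V] (hlam : IsKerHaar src tgt lam) (h : V → ℤ) :
    ∫ J, angleChar (pairing (grad src tgt h) J) ∂lam = 1 := by
  obtain ⟨hprob, hker, -⟩ := hlam
  set n := grad src tgt h with hn
  have hmeas : MeasurableSet {J : E → Real.Angle | angleChar (pairing n J) = 1} :=
    (isClosed_eq (continuous_char n) continuous_const).measurableSet
  have h1 : lam {J : E → Real.Angle | angleChar (pairing n J) = 1} = 1 := by
    refine le_antisymm prob_le_one (hker ▸ measure_mono fun J hJ => ?_)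
    have hJ' : divg src tgt J = 0 := hJ
    simp [hn, pairing_grad, hJ']
  have h2 : (fun J : E → Real.Angle => angleChar (pairing n J)) =ᵐ[lam] fun _ => 1 :=
    (mem_ae_iff_prob_eq_one hmeas).2 h1
  rw [integral_congr_ae h2]
  simp

/-- The Fourier series with coefficients `a` as a function on `ℝ/2πℤ`. -/
def fseries (a : ℤ → ℂ) (θ : Real.Angle) : ℂ := ∑' k : ℤ, a k * angleChar θ ^ k

theorem norm_fseries_term (a : ℤ → ℂ) (θ : Real.Angle) (k : ℤ) :
    ‖a k * angleChar θ ^ k‖ = ‖a k‖ := by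
  simp [norm_angleChar]

theorem continuous_fseries {a : ℤ → ℂ} (ha : Summable a) : Continuous (fseries a) := by
  refine continuous_tsum (fun k => ?_) ha.norm fun k θ => (norm_fseries_term a θ k).le
  exact continuous_const.mul
    (continuous_angleChar.zpow₀ _ fun _ => Or.inl (angleChar_ne_zero _))

/-- Poisson summation on `ker d*`: the Haar average of a product of Fourier series is the sum of
the products of their coefficients over the annihilator of `ker d*`, i.e. over gradients. -/
theorem hasSum_integral_prod_fseries [Fintype V] (hconn : IsConn src tgt) (bd : V)
    (hlam : IsKerHaar src tgt lam) {a : E → ℤ → ℂ} (ha : ∀ e, Summable (a e)) :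
    HasSum (fun h : {h : V → ℤ // h bd = 0} => ∏ e, a e (grad src tgt h.1 e))
      (∫ J, ∏ e, fseries (a e) (J e) ∂lam) := by
  have hprob := hlam.1
  have hexp (J : E → Real.Angle) : ∏ e, fseries (a e) (J e)
      = ∑' n : E → ℤ, (∏ e, a e (n e)) * angleChar (pairing n J) := by
    have hs (e : E) : Summable fun k => a e k * angleChar (J e) ^ k :=
      Summable.of_norm (by simpa only [norm_fseries_term] using (ha e).norm)
    rw [show ∏ e, fseries (a e) (J e) = _ from (summable_and_tsum_pi_prod hs).2.symm]
    simp_rw [Finset.prod_mul_distrib, angleChar_pairing]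
  have hsum := hasSum_integral_of_summable_integral_norm (μ := lam)
    (F := fun (n : E → ℤ) (J : E → Real.Angle) =>
      (∏ e, a e (n e)) * angleChar (pairing n J))
    (fun n => integrable_of_continuous (continuous_const.mul (continuous_char n)))
    (by simpa [norm_angleChar] using (summable_and_tsum_pi_prod ha).1.norm)
  simp_rw [← hexp, integral_const_mul] at hsum
  rw [← (grad_injective hconn bd).hasSum_iff] at hsum
  · have hfun (h : {h : V → ℤ // h bd = 0}) : ∏ e, a e (grad src tgt h.1 e)
        = (∏ e, a e (grad src tgt h.1 e)) *
          ∫ J, angleChar (pairing (grad src tgt h.1) J) ∂lam := by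
      rw [integral_char_grad hlam, mul_one]
    rw [funext hfun]
    exact hsum
  · intro n hn
    by_contra h0
    apply hn
    refine exists_grad_of_pairing hconn bd n fun J hJ => ?_
    by_contra hJn
    exact h0 (by rw [integral_char_eq_zero hlam n hJ hJn, mul_zero])

end Fourier

/-! ### The spin weight and its derivatives -/

section Weight

/-- The Fourier coefficients `(ik)^j p_k` of the `j`-th derivative of the spin weight. -/
def coef (p : ℤ → ℝ) (j : ℕ) (k : ℤ) : ℂ := (Complex.I * k) ^ j * p k

theorem norm_coef {p : ℤ → ℝ} (hnonneg : ∀ n, 0 ≤ p n) (j : ℕ) (k : ℤ) :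
    ‖coef p j k‖ = |(k : ℝ)| ^ j * p k := by
  simp [coef, abs_of_nonneg (hnonneg k)]

theorem summable_coef {p : ℤ → ℝ} (hnonneg : ∀ n, 0 ≤ p n)
    (hsum : Summable fun n : ℤ => (n : ℝ) ^ 2 * p n) {j : ℕ} (hj : j ≤ 2) :
    Summable (coef p j) := by
  -- `k² p_k` misses the term `p 0`, which is added back by hand
  have h0 : Summable fun k : ℤ => if k = 0 then p 0 else 0 :=
    summable_of_ne_finset_zero (s := {0}) (by simp +contextual)
  refine Summable.of_norm_bounded (hsum.add h0) fun k => ?_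
  rw [norm_coef hnonneg]
  have hp := hnonneg k
  by_cases hk : k = 0
  · subst hk
    have : (|((0 : ℤ) : ℝ)|) ^ j ≤ 1 := by
      simpa using pow_le_one₀ (le_refl (0 : ℝ)) zero_le_one
    simpa using mul_le_mul_of_nonneg_right this hp
  · have h1 : (1 : ℝ) ≤ |(k : ℝ)| := by exact_mod_cast Int.one_le_abs hk
    have h2 : |(k : ℝ)| ^ j ≤ (k : ℝ) ^ 2 := by
      rw [← sq_abs (k : ℝ)]
      exact pow_le_pow_right₀ h1 hj
    simpa [hk] using mul_le_mul_of_nonneg_right h2 hp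

theorem angleChar_coe_zpow (α : ℝ) (k : ℤ) :
    angleChar (α : Real.Angle) ^ k = Complex.exp (Complex.I * k * α) := by
  rw [angleChar_apply, Real.Angle.toCircle_coe, Circle.coe_exp, ← Complex.exp_int_mul]
  ring_nf

/-- Term-by-term differentiation of the Fourier series of the weight. -/
theorem hasDerivAt_fseries {p : ℤ → ℝ} (hnonneg : ∀ n, 0 ≤ p n)
    (hsum : Summable fun n : ℤ => (n : ℝ) ^ 2 * p n) {j : ℕ} (hj : j < 2) (α : ℝ) :
    HasDerivAt (fun x : ℝ => fseries (coef p j) x) (fseries (coef p (j + 1)) α) α := by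
  refine hasDerivAt_tsum (y₀ := 0) (summable_coef hnonneg hsum hj).norm (fun k x => ?_)
    (fun k x => (norm_fseries_term _ _ k).le) ?_ α
  · simp_rw [angleChar_coe_zpow]
    have h1 : HasDerivAt (fun x : ℝ => Complex.I * k * (x : ℂ)) (Complex.I * k * 1) x :=
      (Complex.ofRealCLM.hasDerivAt).const_mul _
    refine (h1.cexp.const_mul (coef p j k)).congr_deriv ?_
    simp only [coef, pow_succ]
    ring
  · refine Summable.of_norm ?_
    simpa only [norm_fseries_term] using (summable_coef hnonneg hsum hj.le).norm

/-- The symmetry of `p` makes the exponential series real, equal to the cosine series. -/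
theorem ofReal_wgt {p : ℤ → ℝ} (hsym : ∀ n : ℤ, p (-n) = p n) (hnonneg : ∀ n, 0 ≤ p n)
    (hsum : Summable fun n : ℤ => (n : ℝ) ^ 2 * p n) (α : ℝ) :
    (wgt p α : ℂ) = fseries (coef p 0) α := by
  have hs : Summable fun k : ℤ => coef p 0 k * angleChar (α : Real.Angle) ^ k := by
    refine Summable.of_norm ?_
    simpa only [norm_fseries_term] using (summable_coef hnonneg hsum zero_le_two).norm
  have hs' := (Equiv.neg ℤ).summable_iff.2 hs
  have h1 : fseries (coef p 0) α
      = ∑' k : ℤ, coef p 0 (-k) * angleChar (α : Real.Angle) ^ (-k) :=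
    ((Equiv.neg ℤ).tsum_eq fun k : ℤ => coef p 0 k * angleChar (α : Real.Angle) ^ k).symm
  have h2 : (2 : ℂ) * wgt p α = fseries (coef p 0) α + fseries (coef p 0) α := by
    conv_rhs => lhs; rw [h1]
    rw [fseries, ← Summable.tsum_add (f := fun k : ℤ => coef p 0 (-k) * angleChar α ^ (-k)) hs' hs,
      wgt, Complex.ofReal_tsum, ← tsum_mul_left]
    refine tsum_congr fun k => ?_
    simp only [angleChar_coe_zpow, coef, pow_zero, one_mul, hsym]
    push_cast
    rw [Complex.cos, show Complex.I * -(k : ℂ) * α = -(k * α) * Complex.I by ring,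
      show Complex.I * (k : ℂ) * α = (k * α) * Complex.I by ring]
    ring
  linear_combination h2 / 2

/-- A real function whose complexification is differentiable has a real derivative. -/
theorem hasDerivAt_of_ofReal {f : ℝ → ℝ} {f' : ℂ} {x : ℝ}
    (h : HasDerivAt (fun t : ℝ => (f t : ℂ)) f' x) :
    HasDerivAt f f'.re x ∧ (f'.re : ℂ) = f' := by
  have h1 : HasDerivAt f f'.re x := Complex.reCLM.hasFDerivAt.comp_hasDerivAt x h
  exact ⟨h1, h1.ofReal_comp.unique h⟩

/-- There are continuous real functions `W 0`, `W 1`, `W 2` on `ℝ/2πℤ`, representing `w`, `w'` and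
`w''`, which are given by the differentiated Fourier series and through which `𝒰'` and `𝒰''` are
expressed. Passing to `ℝ/2πℤ` makes them continuous, which `Real.Angle.toReal` itself is not. -/
theorem exists_weight_derivs {p : ℤ → ℝ} (hsym : ∀ n : ℤ, p (-n) = p n) (hnonneg : ∀ n, 0 ≤ p n)
    (hsum : Summable fun n : ℤ => (n : ℝ) ^ 2 * p n) (hw : ∀ α : ℝ, 0 < wgt p α) :
    ∃ W : ℕ → Real.Angle → ℝ, (∀ j ≤ 2, Continuous (W j)) ∧
      (∀ j ≤ 2, ∀ θ, (W j θ : ℂ) = fseries (coef p j) θ) ∧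
      (∀ θ, W 0 θ = wgt p θ.toReal) ∧ (∀ θ, 0 < W 0 θ) ∧
      (∀ θ, deriv (spinU p) θ.toReal = -(W 1 θ / W 0 θ)) ∧
      ∀ θ, deriv (deriv (spinU p)) θ.toReal = (W 1 θ / W 0 θ) ^ 2 - W 2 θ / W 0 θ := by
  have h0 := ofReal_wgt hsym hnonneg hsum
  have d0 (x : ℝ) := hasDerivAt_of_ofReal (f := wgt p) (x := x)
    (by simpa only [h0] using hasDerivAt_fseries hnonneg hsum (j := 0) two_pos x)
  have d1 (x : ℝ) := hasDerivAt_of_ofReal (f := fun t : ℝ => (fseries (coef p 1) t).re) (x := x)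
    (by simpa only [(d0 _).2] using hasDerivAt_fseries hnonneg hsum (j := 1) one_lt_two x)
  have hw0 (θ : Real.Angle) : (fseries (coef p 0) θ).re = wgt p θ.toReal := by
    rw [← Complex.ofReal_re (wgt p θ.toReal), h0, Real.Angle.coe_toReal]
  have u1 : deriv (spinU p) = fun x : ℝ => -((fseries (coef p 1) x).re / wgt p x) :=
    funext fun x => ((d0 x).1.log (hw x).ne').neg.deriv
  refine ⟨fun j θ => (fseries (coef p j) θ).re,
    fun j hj => Complex.continuous_re.comp (continuous_fseries (summable_coef hnonneg hsum hj)),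
    fun j hj θ => ?_, hw0, fun θ => (hw _).trans_eq (hw0 θ).symm, fun θ => ?_, fun θ => ?_⟩
  · beta_reduce
    rw [← Real.Angle.coe_toReal θ]
    interval_cases j
    · rw [← h0, Complex.ofReal_re]
    · exact (d0 _).2
    · exact (d1 _).2
  · simp only [u1, hw0, Real.Angle.coe_toReal]
  · have hne := (hw θ.toReal).ne'
    have u2 : HasDerivAt (fun x : ℝ => -((fseries (coef p 1) x).re / wgt p x)) _ θ.toReal :=
      ((d1 θ.toReal).1.div (d0 θ.toReal).1 hne).neg
    simp only [u1, u2.deriv, hw0, Real.Angle.coe_toReal]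
    field_simp
    ring

end Weight

/-! ### Covariance duality -/

section Duality

theorem continuous_ratio {E : Type*} {W : ℕ → Real.Angle → ℝ} (hWc : ∀ j ≤ 2, Continuous (W j))
    (hpos : ∀ θ, 0 < W 0 θ) {j : ℕ} (hj : j ≤ 2) (e : E) : Continuous fun J : E → Real.Angle => W j (J e) / W 0 (J e) :=
  ((hWc j hj).comp (continuous_apply e)).div ((hWc 0 zero_le_two).comp (continuous_apply e))
    fun _ => (hpos _).ne'

variable {V E : Type*} [Fintype V] [Fintype E] [DecidableEq V] {src tgt : E → V}
  {p : ℤ → ℝ} {W : ℕ → Real.Angle → ℝ} {lam : Measure (E → Real.Angle)}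

/-- The number of derivatives falling on edge `i` when one differentiates once in the direction
of each of `e` and `f`. -/
def order [DecidableEq E] (e f : E) (i : E) : ℕ := (if i = e then 1 else 0) + if i = f then 1 else 0

/-- Poisson summation for the product of the derivatives `w^(j_e)`. -/
theorem hasSum_prod_real (hconn : IsConn src tgt) (bd : V) (hlam : IsKerHaar src tgt lam)
    (hnonneg : ∀ n, 0 ≤ p n) (hsum : Summable fun n : ℤ => (n : ℝ) ^ 2 * p n)
    (hWf : ∀ j ≤ 2, ∀ θ, (W j θ : ℂ) = fseries (coef p j) θ) {j : E → ℕ} (hj : ∀ e, j e ≤ 2) :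
    HasSum (fun h : {h : V → ℤ // h bd = 0} => ∏ e, coef p (j e) (grad src tgt h.1 e))
      ((∫ J, ∏ e, W (j e) (J e) ∂lam : ℝ) : ℂ) := by
  have := hasSum_integral_prod_fseries hconn bd hlam (a := fun e => coef p (j e))
    fun e => summable_coef hnonneg hsum (hj e)
  have hfun (J : E → Real.Angle) : ((∏ e, W (j e) (J e) : ℝ) : ℂ)
      = ∏ e, fseries (coef p (j e)) (J e) := by
    rw [Complex.ofReal_prod]
    exact Finset.prod_congr rfl fun e _ => hWf _ (hj e) _
  rw [← integral_complex_ofReal]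
  simp_rw [hfun]
  exact this

theorem partition_function_eq (hconn : IsConn src tgt) (bd : V) (hlam : IsKerHaar src tgt lam)
    (hnonneg : ∀ n, 0 ≤ p n) (hsum : Summable fun n : ℤ => (n : ℝ) ^ 2 * p n)
    (hWf : ∀ j ≤ 2, ∀ θ, (W j θ : ℂ) = fseries (coef p j) θ) :
    ∑' h : {h : V → ℤ // h bd = 0}, ∏ e, p (grad src tgt h.1 e)
      = ∫ J, ∏ e, W 0 (J e) ∂lam := by
  have := hasSum_prod_real hconn bd hlam hnonneg hsum hWf (j := fun _ => 0) fun _ => Nat.zero_le _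
  simp only [coef, pow_zero, one_mul, ← Complex.ofReal_prod] at this
  exact (Complex.hasSum_ofReal.1 this).tsum_eq

theorem prod_coef_order [DecidableEq E] (n : E → ℤ) (e f : E) :
    ∏ i, coef p (order e f i) (n i) = ((-((n e : ℝ) * n f * ∏ i, p (n i)) : ℝ) : ℂ) := by
  simp only [coef, order, pow_add, Finset.prod_mul_distrib]
  simp only [pow_ite, pow_one, pow_zero, Finset.prod_ite_eq', Finset.mem_univ, if_true]
  push_cast
  linear_combination ((n e : ℂ) * n f * ∏ i, (p (n i) : ℂ)) * Complex.I_mul_I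

/-- With `e` and `f` differentiated, the product is `(𝒰'(J_e) 𝒰'(J_f) - 1_{e = f} 𝒰''(J_e)) ∏ w`. -/
theorem prod_W_order [DecidableEq E] (hpos : ∀ θ, 0 < W 0 θ) (J : E → Real.Angle) (e f : E) :
    ∏ i, W (order e f i) (J i) =
      (W 1 (J e) / W 0 (J e) * (W 1 (J f) / W 0 (J f))
        - if e = f then (W 1 (J e) / W 0 (J e)) ^ 2 - W 2 (J e) / W 0 (J e) else 0)
        * ∏ i, W 0 (J i) := by
  have h0 (i : E) : W 0 (J i) ≠ 0 := (hpos _).ne'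
  have h1 : ∏ i, W (order e f i) (J i)
      = (∏ i, W (order e f i) (J i) / W 0 (J i)) * ∏ i, W 0 (J i) := by
    rw [← Finset.prod_mul_distrib]
    exact Finset.prod_congr rfl fun i _ => (div_mul_cancel₀ _ (h0 i)).symm
  rw [h1]
  congr 1
  by_cases hef : e = f
  · subst hef
    rw [Finset.prod_eq_single e]
    · simp [order]
      ring
    · intro i _ hi
      simp [order, hi, h0]
    · simp
  · rw [Finset.prod_eq_mul e f hef]
    · simp [order, hef, Ne.symm hef]
    · intro i _ hi
      simp [order, hi.1, hi.2, h0]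
    · simp
    · simp

theorem continuous_prod_W (hWc : ∀ j ≤ 2, Continuous (W j)) :
    Continuous fun J : E → Real.Angle => ∏ i, W 0 (J i) :=
  continuous_finsetProd _ fun i _ => (hWc 0 zero_le_two).comp (continuous_apply i)

/-- The duality for a single pair of edges, before normalisation. -/
theorem hasSum_edge_pair [DecidableEq E] (hconn : IsConn src tgt) (bd : V)
    (hlam : IsKerHaar src tgt lam)
    (hnonneg : ∀ n, 0 ≤ p n) (hsum : Summable fun n : ℤ => (n : ℝ) ^ 2 * p n)
    (hWc : ∀ j ≤ 2, Continuous (W j)) (hpos : ∀ θ, 0 < W 0 θ)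
    (hWf : ∀ j ≤ 2, ∀ θ, (W j θ : ℂ) = fseries (coef p j) θ) (e f : E) :
    HasSum (fun h : {h : V → ℤ // h bd = 0} =>
        ((grad src tgt h.1 e : ℤ) : ℝ) * ((grad src tgt h.1 f : ℤ) : ℝ) * ∏ i, p (grad src tgt h.1 i))
      ((if e = f then
          ∫ J, ((W 1 (J e) / W 0 (J e)) ^ 2 - W 2 (J e) / W 0 (J e)) * ∏ i, W 0 (J i) ∂lam else 0)
        - ∫ J, W 1 (J e) / W 0 (J e) * (W 1 (J f) / W 0 (J f)) * ∏ i, W 0 (J i) ∂lam) := by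
  have hprob := hlam.1
  have hP := continuous_prod_W (E := E) hWc
  have hr (e : E) := continuous_ratio hWc hpos one_le_two e
  have hr2 (e : E) := continuous_ratio hWc hpos le_rfl e
  have := hasSum_prod_real hconn bd hlam hnonneg hsum hWf (j := order e f) fun i => by
    unfold order
    split_ifs <;> simp
  simp only [prod_coef_order, prod_W_order hpos] at this
  have := (Complex.hasSum_ofReal.1 this).neg
  simp only [neg_neg] at this
  refine Eq.mp (congrArg (fun x => HasSum _ x _) ?_) this
  simp only [sub_mul (_ * _)]
  rw [integral_sub]
  · split_ifs <;> simp
  · exact integrable_of_continuous (((hr e).mul (hr f)).mul hP)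
  · split_ifs
    · exact integrable_of_continuous ((((hr e).pow 2).sub (hr2 e)).mul hP)
    · simp

end Duality

/-- **Covariance duality (★-heights and ⋄-spins).**
`ν_★[(dh,ε)(dh,ω)] + μ_⋄[(𝒰'(J),ε)(𝒰'(J),ω)] = Σ_e μ_⋄[𝒰''(J_e)] ε_e ω_e`. -/
theorem covariance_duality_star_heights_diamond_spins
    {V E : Type*} [Fintype V] [Fintype E] [DecidableEq V]
    (src tgt : E → V) (hconn : IsConn src tgt) (bd : V)
    (p : ℤ → ℝ)
    (hsym : ∀ n : ℤ, p (-n) = p n)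
    (hnonneg : ∀ n : ℤ, 0 ≤ p n)
    (hsum : Summable fun n : ℤ => (n : ℝ) ^ 2 * p n)
    (hw : ∀ α : ℝ, 0 < wgt p α)
    (lam : Measure (E → Real.Angle)) (hlam : IsKerHaar src tgt lam)
    (ε ω : E → ℝ) :
    starHeightExp src tgt bd p
        (fun h => (∑ e, ((grad src tgt h e : ℤ) : ℝ) * ε e) *
          (∑ e, ((grad src tgt h e : ℤ) : ℝ) * ω e))
      + diamSpinExp p lam
          (fun J => (∑ e, deriv (spinU p) ((J e).toReal) * ε e) *
            (∑ e, deriv (spinU p) ((J e).toReal) * ω e))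
      = ∑ e, diamSpinExp p lam
          (fun J => deriv (deriv (spinU p)) ((J e).toReal)) * (ε e * ω e) := by
  classical
  have hprob := hlam.1
  obtain ⟨W, hWc, hWf, hW0, hpos, hU1, hU2⟩ := exists_weight_derivs hsym hnonneg hsum hw
  have hpair := hasSum_edge_pair hconn bd hlam hnonneg hsum hWc hpos hWf
  unfold starHeightExp diamSpinExp
  simp only [← hW0, hU1, hU2, partition_function_eq hconn bd hlam hnonneg hsum hWf]
  set D : E → ℝ := fun e =>
    ∫ J, ((W 1 (J e) / W 0 (J e)) ^ 2 - W 2 (J e) / W 0 (J e)) * ∏ i, W 0 (J i) ∂lam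
  set M : E → E → ℝ := fun e f =>
    ∫ J, W 1 (J e) / W 0 (J e) * (W 1 (J f) / W 0 (J f)) * ∏ i, W 0 (J i) ∂lam with hM
  have hA : ∑' h : {h : V → ℤ // h bd = 0},
      (∑ e, ((grad src tgt h.1 e : ℤ) : ℝ) * ε e) * (∑ e, ((grad src tgt h.1 e : ℤ) : ℝ) * ω e)
        * ∏ i, p (grad src tgt h.1 i)
      = ∑ e, ∑ f, ε e * ω f * ((if e = f then D e else 0) - M e f) := by
    rw [← (hasSum_sum fun e _ => hasSum_sum fun f _ =>
      (hpair e f).mul_left (ε e * ω f)).tsum_eq]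
    refine tsum_congr fun h => ?_
    rw [Finset.sum_mul_sum, Finset.sum_mul]
    refine Finset.sum_congr rfl fun e _ => ?_
    rw [Finset.sum_mul]
    exact Finset.sum_congr rfl fun f _ => by ring
  have hB : ∫ J, (∑ e, -(W 1 (J e) / W 0 (J e)) * ε e) * (∑ e, -(W 1 (J e) / W 0 (J e)) * ω e)
        * ∏ i, W 0 (J i) ∂lam
      = ∑ e, ∑ f, ε e * ω f * M e f := by
    have hint (e f : E) : Integrable (fun J : E → Real.Angle => ε e * ω f *
        (W 1 (J e) / W 0 (J e) * (W 1 (J f) / W 0 (J f)) * ∏ i, W 0 (J i))) lam :=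
      (integrable_of_continuous (((continuous_ratio hWc hpos one_le_two e).mul
        (continuous_ratio hWc hpos one_le_two f)).mul (continuous_prod_W hWc))).const_mul _
    simp only [hM, ← integral_const_mul]
    simp_rw [← integral_finsetSum _ fun f _ => hint _ f]
    rw [← integral_finsetSum _ fun e _ => integrable_finsetSum _ fun f _ => hint e f]
    refine integral_congr_ae (Filter.Eventually.of_forall fun J => ?_)
    beta_reduce
    rw [Finset.sum_mul_sum, Finset.sum_mul]
    refine Finset.sum_congr rfl fun e _ => ?_
    rw [Finset.sum_mul]
    exact Finset.sum_congr rfl fun f _ => by ring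
  rw [hA, hB, ← add_div, ← Finset.sum_add_distrib, Finset.sum_div]
  refine Finset.sum_congr rfl fun e _ => ?_
  rw [← Finset.sum_add_distrib]
  have hdiag : ∑ f, (ε e * ω f * ((if e = f then D e else 0) - M e f) + ε e * ω f * M e f)
      = ε e * ω e * D e := by
    rw [Finset.sum_eq_single e]
    · rw [if_pos rfl]
      ring
    · intro f _ hf
      simp [Ne.symm hf]
    · simp
  rw [hdiag]
  ring
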